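/- arXiv:1409.2767 — 3 statements merged into one kernel-verified Lean document; each statement's English description precedes it below -/
import Mathlib

section
/- (Lemma A.4.) There exist constants c̃₀ > 0 and C̃₀ > 0 such that for all n large enough, all j ∈ {0,1,…,M_{ε_n}}, and all s ∈ 𝒳 with 2^j ε_n² ≤ ‖s − s0‖_2² < 2^{j+1} ε_n², one has Σ_{i=1}^n E[ log( p_{i,n,s}(Y_{i,n}) / p_{i,n,0}(Y_{i,n}) ) ] ≤ −(c̃₀ κ²/K⁴)·2^j·ε_n²·n + C̃₀, where the expectation is taken with Y_{i,n} ∼ N(0, v_{i,n}(s0)). -/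
/-!
With `v = vin s n i` and `v₀ = vin s0 n i`, each summand is the negative Kullback–Leibler divergence
of two centred Gaussians, `(log (v₀ / v) + 1 - v₀ / v) / 2` (`integral_log_gaussDensity_div`). Since
`log x = 2 log √x ≤ 2 (√x - 1)`, it is at most `-(√v₀ - √v)² / (2v)`, and as `v, v₀ ≤ K² / n` this is
at most `-n² (v₀ - v)² / (8 K⁴)` (`kl_le`).

It remains to bound `n² ∑ (v₀ - v)²` from below. Here `v₀ - v` is the integral of `g = s0² - s²` over
a cell of length `1 / n`, and `g` is `4KM`-Lipschitz, so the variance of `g` on the cell is at most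
`(4KM / n)²` (`cell_integral_sq_le`). Summing over the cells,
`n ∫ g² ≤ n² ∑ (v₀ - v)² + (4KM)² / n`. Finally `g² = (s0 - s)² (s0 + s)² ≥ 4κ² (s0 - s)²`.
This yields the claim with `c0 = 1 / 2` and `C0 = (4KM)² / (8 K⁴)`, for every `n ≥ 1`.
-/

noncomputable section
open MeasureTheory ProbabilityTheory Real Filter

def memX (κ K M : ℝ) (s : ℝ → ℝ) : Prop :=
  (∀ u ∈ Set.Icc (0:ℝ) 1, s u ∈ Set.Icc κ K) ∧
  DifferentiableOn ℝ s (Set.Icc (0:ℝ) 1) ∧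
  ∀ u ∈ Set.Icc (0:ℝ) 1, |derivWithin s (Set.Icc (0:ℝ) 1) u| ≤ M

def vin (s : ℝ → ℝ) (n i : ℕ) : ℝ := ∫ u in (((i:ℝ) - 1)/n)..((i:ℝ)/n), (s u)^2

def gaussDensity (v y : ℝ) : ℝ := (Real.sqrt (2 * π * v))⁻¹ * Real.exp (-(y^2) / (2*v))

def fS (s0 s : ℝ → ℝ) (n : ℕ) (z : ℝ) : ℝ :=
  (∫ u in z..(z + 1/n), ((s0 u)^2 - (s u)^2)) / (∫ u in z..(z + 1/n), (s u)^2)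

def supDist (s t : ℝ → ℝ) : ℝ := ⨆ u : Set.Icc (0:ℝ) 1, |s u.1 - t u.1|

def l2DistSq (s t : ℝ → ℝ) : ℝ := ∫ u in (0:ℝ)..1, (s u - t u)^2

def jointLaw (s0 : ℝ → ℝ) (n : ℕ) : Measure (Fin n → ℝ) :=
  Measure.pi fun i => gaussianReal 0 (Real.toNNReal (vin s0 n (i.1 + 1)))

def Ln (s : ℝ → ℝ) (n : ℕ) (y : Fin n → ℝ) : ℝ :=
  ∏ i : Fin n, gaussDensity (vin s n (i.1 + 1)) (y i)

def likRatio (s0 s : ℝ → ℝ) (n : ℕ) (y : Fin n → ℝ) : ℝ :=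
  ∏ i : Fin n, gaussDensity (vin s n (i.1 + 1)) (y i) / gaussDensity (vin s0 n (i.1 + 1)) (y i)

def rateCond (ε : ℕ → ℝ) : Prop :=
  (∀ n, 0 < ε n) ∧ ∃ a b : ℝ, 0 < a ∧ a ≤ b ∧
    ∀ n : ℕ, 2 ≤ n →
      a * (n:ℝ) ^ (-(1:ℝ)/3) * Real.log n ≤ ε n ∧ ε n ≤ b * (n:ℝ) ^ (-(1:ℝ)/3) * Real.log n

def Meps (K ε : ℝ) : ℕ := sInf {m : ℕ | 0 < m ∧ 4 * K^2 ≤ (2:ℝ)^m * ε^2}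

def sigma0Sq : ℝ := 2 * ∫ z, (1 - z^2)^2 * Real.exp (|1 - z^2| / 3) ∂(gaussianReal 0 1)

lemma integral_log_gaussDensity_div {v w : ℝ} (hv : 0 < v) (hw : 0 < w) :
    ∫ y, Real.log (gaussDensity v y / gaussDensity w y) ∂(gaussianReal 0 (Real.toNNReal w))
      = (Real.log (w / v) + 1 - w / v) / 2 := by
  have hpt : ∀ y : ℝ, Real.log (gaussDensity v y / gaussDensity w y)
      = Real.log (w / v) / 2 + (1 / (2 * w) - 1 / (2 * v)) * y ^ 2 := by
    intro y
    have h1 : 0 < 2 * π * v := by positivity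
    have h2 : 0 < 2 * π * w := by positivity
    unfold gaussDensity
    rw [Real.log_div (by positivity) (by positivity), Real.log_mul (by positivity) (by positivity),
      Real.log_mul (by positivity) (by positivity), Real.log_inv, Real.log_inv, Real.log_exp,
      Real.log_exp, Real.log_sqrt h1.le, Real.log_sqrt h2.le,
      Real.log_mul (by positivity) hv.ne', Real.log_mul (by positivity) hw.ne',
      Real.log_div hw.ne' hv.ne']
    field_simp
    ring
  have hint : Integrable (fun y : ℝ => y ^ 2) (gaussianReal 0 (Real.toNNReal w)) :=
    (memLp_id_gaussianReal (μ := 0) (v := Real.toNNReal w) 2).integrable_sq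
  have hsq : ∫ y, y ^ 2 ∂(gaussianReal 0 (Real.toNNReal w)) = w := by
    have h := variance_fun_id_gaussianReal (μ := 0) (v := Real.toNNReal w)
    rw [variance_of_integral_eq_zero (by fun_prop) integral_id_gaussianReal] at h
    rw [h, Real.coe_toNNReal _ hw.le]
  simp_rw [hpt]
  rw [integral_add (integrable_const _) (hint.const_mul _), integral_const_mul, hsq]
  simp only [integral_const, probReal_univ, smul_eq_mul, one_mul]
  field_simp
  ring

lemma kl_le {v w B : ℝ} (hv : 0 < v) (hw : 0 < w) (hvB : v ≤ B) (hwB : w ≤ B) :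
    (Real.log (w / v) + 1 - w / v) / 2 ≤ -((w - v) ^ 2 / (8 * B ^ 2)) := by
  have hB : 0 < B := hv.trans_le hvB
  obtain ⟨a, ha, rfl⟩ : ∃ a, 0 < a ∧ a ^ 2 = v := ⟨√v, by positivity, Real.sq_sqrt hv.le⟩
  obtain ⟨b, hb, rfl⟩ : ∃ b, 0 < b ∧ b ^ 2 = w := ⟨√w, by positivity, Real.sq_sqrt hw.le⟩
  have hlog : Real.log (b ^ 2 / a ^ 2) ≤ 2 * (b / a - 1) := by
    rw [← div_pow, Real.log_pow]
    have := Real.log_le_sub_one_of_pos (div_pos hb ha)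
    push_cast
    linarith
  have hkey : (b ^ 2 - a ^ 2) ^ 2 / (8 * B ^ 2) ≤ (b - a) ^ 2 / (2 * a ^ 2) := by
    rw [div_le_div_iff₀ (by positivity) (by positivity)]
    have h1 : (b + a) ^ 2 ≤ 4 * B := by nlinarith [sq_nonneg (b - a)]
    have h2 : (b + a) ^ 2 * a ^ 2 ≤ 4 * B * B :=
      mul_le_mul h1 hvB (by positivity) (by positivity)
    nlinarith [mul_le_mul_of_nonneg_left h2 (sq_nonneg (b - a))]
  have heq : (2 * (b / a - 1) + 1 - b ^ 2 / a ^ 2) / 2 = -((b - a) ^ 2 / (2 * a ^ 2)) := by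
    field_simp
    ring
  linarith

/-- The variance of `g` over an interval, here multiplied by `(b - a) ^ 2`, is at most its mean square
deviation from the value at the left endpoint, hence at most `δ ^ 2`. -/
lemma cell_integral_sq_le {g : ℝ → ℝ} {a b δ : ℝ} (hab : a < b)
    (hg : ContinuousOn g (Set.Icc a b)) (hδ : ∀ x ∈ Set.Icc a b, |g x - g a| ≤ δ) :
    (b - a) * ∫ x in a..b, (g x) ^ 2 ≤ (∫ x in a..b, g x) ^ 2 + (b - a) ^ 2 * δ ^ 2 := by
  have hu : Set.uIcc a b = Set.Icc a b := Set.uIcc_of_le hab.le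
  have i1 : IntervalIntegrable g volume a b :=
    ContinuousOn.intervalIntegrable (by rwa [hu])
  have i2 : IntervalIntegrable (fun x => (g x) ^ 2) volume a b :=
    ContinuousOn.intervalIntegrable (by rw [hu]; exact hg.pow 2)
  have i3 : IntervalIntegrable (fun x => (g x - g a) ^ 2) volume a b :=
    ContinuousOn.intervalIntegrable (by rw [hu]; exact (hg.sub continuousOn_const).pow 2)
  have hle : ∫ x in a..b, (g x - g a) ^ 2 ≤ (b - a) * δ ^ 2 := by
    have := intervalIntegral.integral_mono_on hab.le i3
      (intervalIntegrable_const (c := δ ^ 2)) (fun x hx => sq_le_sq' (by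
        have := hδ x hx; rw [abs_le] at this; exact this.1) (le_of_abs_le (hδ x hx)))
    simpa using this
  have hexp : ∫ x in a..b, (g x - g a) ^ 2
      = (∫ x in a..b, (g x) ^ 2) - 2 * g a * (∫ x in a..b, g x) + (b - a) * (g a) ^ 2 := by
    have : ∀ x, (g x - g a) ^ 2 = (g x) ^ 2 - 2 * g a * g x + (g a) ^ 2 := fun x => by ring
    simp_rw [this]
    rw [intervalIntegral.integral_add (i2.sub (i1.const_mul _)) intervalIntegrable_const,
      intervalIntegral.integral_sub i2 (i1.const_mul _), intervalIntegral.integral_const_mul,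
      intervalIntegral.integral_const, smul_eq_mul]
  have hba : 0 < b - a := sub_pos.2 hab
  rw [hexp] at hle
  -- The slack in the claim is the square `((b - a) g(a) - ∫ g)²`.
  nlinarith [mul_le_mul_of_nonneg_left hle hba.le,
    sq_nonneg ((b - a) * g a - ∫ x in a..b, g x)]

lemma memX.abs_sub_le {κ K M : ℝ} {s : ℝ → ℝ} (hs : memX κ K M s) {x y : ℝ}
    (hx : x ∈ Set.Icc (0:ℝ) 1) (hy : y ∈ Set.Icc (0:ℝ) 1) : |s x - s y| ≤ M * |x - y| := by
  simpa [Real.norm_eq_abs] using (convex_Icc (0:ℝ) 1).norm_image_sub_le_of_norm_derivWithin_le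
    hs.2.1 (fun u hu => by simpa using hs.2.2 u hu) hy hx

lemma memX.abs_sq_sub_sq_le {κ K M : ℝ} (hκ : 0 < κ) {s : ℝ → ℝ} (hs : memX κ K M s)
    {x y : ℝ} (hx : x ∈ Set.Icc (0:ℝ) 1) (hy : y ∈ Set.Icc (0:ℝ) 1) :
    |(s x) ^ 2 - (s y) ^ 2| ≤ 2 * K * M * |x - y| := by
  have h := hs.abs_sub_le hx hy
  have hx' := hs.1 x hx
  have hy' := hs.1 y hy
  have hsum : |s x + s y| ≤ 2 * K := by
    rw [abs_le]; constructor <;> linarith [hx'.1, hx'.2, hy'.1, hy'.2]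
  calc |(s x) ^ 2 - (s y) ^ 2| = |s x + s y| * |s x - s y| := by rw [← abs_mul]; congr 1; ring
    _ ≤ (2 * K) * (M * |x - y|) :=
        mul_le_mul hsum h (abs_nonneg _) ((abs_nonneg _).trans hsum)
    _ = _ := by ring

lemma cell_bounds {n i : ℕ} (hi : i ∈ Finset.Icc 1 n) :
    0 ≤ ((i:ℝ) - 1) / n ∧ ((i:ℝ) - 1) / n < (i:ℝ) / n ∧ (i:ℝ) / n ≤ 1
      ∧ (i:ℝ) / n - ((i:ℝ) - 1) / n = 1 / n := by
  obtain ⟨h1, h2⟩ := Finset.mem_Icc.1 hi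
  have hn : (0:ℝ) < n := by exact_mod_cast h1.trans h2
  have h1' : (1:ℝ) ≤ i := by exact_mod_cast h1
  have h2' : (i:ℝ) ≤ n := by exact_mod_cast h2
  refine ⟨div_nonneg (by linarith) hn.le, div_lt_div_of_pos_right (by linarith) hn,
    (div_le_one hn).2 h2', by ring⟩

lemma memX.vin_bounds {κ K M : ℝ} (hκ : 0 < κ) {s : ℝ → ℝ} (hs : memX κ K M s)
    {n i : ℕ} (hi : i ∈ Finset.Icc 1 n) : 0 < vin s n i ∧ vin s n i ≤ K ^ 2 / n := by
  obtain ⟨h0, hlt, h1, hlen⟩ := cell_bounds hi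
  have hsub : Set.Icc (((i:ℝ) - 1) / n) ((i:ℝ) / n) ⊆ Set.Icc 0 1 := Set.Icc_subset_Icc h0 h1
  have hint : IntervalIntegrable (fun u => (s u) ^ 2) volume (((i:ℝ) - 1) / n) ((i:ℝ) / n) :=
    ContinuousOn.intervalIntegrable (by
      rw [Set.uIcc_of_le hlt.le]; exact (hs.2.1.continuousOn.mono hsub).pow 2)
  have hlo := intervalIntegral.integral_mono_on hlt.le
    (intervalIntegrable_const (c := κ ^ 2)) hint
    (fun x hx => pow_le_pow_left₀ hκ.le (hs.1 x (hsub hx)).1 2)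
  have hhi := intervalIntegral.integral_mono_on hlt.le hint
    (intervalIntegrable_const (c := K ^ 2))
    (fun x hx => pow_le_pow_left₀ (hκ.le.trans (hs.1 x (hsub hx)).1) (hs.1 x (hsub hx)).2 2)
  rw [intervalIntegral.integral_const, smul_eq_mul] at hlo hhi
  constructor
  · exact (mul_pos (sub_pos.2 hlt) (pow_pos hκ 2)).trans_le hlo
  · rw [hlen] at hhi
    exact hhi.trans_eq (by ring)

/-- The increments over cells of length `1 / n` control `n` times the squared `L²` distance, up to a
discretization error that stays bounded in `n`. -/
lemma le_sum_sq_vin_sub {κ K M : ℝ} (hκ : 0 < κ) {s s0 : ℝ → ℝ} (hs : memX κ K M s)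
    (hs0 : memX κ K M s0) {n : ℕ} (hn : 1 ≤ n) :
    4 * κ ^ 2 * l2DistSq s s0 * n - (4 * K * M) ^ 2
      ≤ (n:ℝ) ^ 2 * ∑ i ∈ Finset.Icc 1 n, (vin s0 n i - vin s n i) ^ 2 := by
  have hn1 : (1:ℝ) ≤ n := by exact_mod_cast hn
  have hn0 : (0:ℝ) < n := by linarith
  have hc := hs.2.1.continuousOn
  have hc0 := hs0.2.1.continuousOn
  set g : ℝ → ℝ := fun u => (s0 u) ^ 2 - (s u) ^ 2 with hgdef
  have hg : ContinuousOn g (Set.Icc 0 1) := (hc0.pow 2).sub (hc.pow 2)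
  have hcell : ∀ i ∈ Finset.Icc 1 n,
      (n:ℝ) * ∫ u in ((i:ℝ) - 1) / n..(i:ℝ) / n, (g u) ^ 2
        ≤ (n:ℝ) ^ 2 * (vin s0 n i - vin s n i) ^ 2 + (4 * K * M) ^ 2 / (n:ℝ) ^ 2 := by
    intro i hi
    obtain ⟨h0, hlt, h1, hlen⟩ := cell_bounds hi
    have hsub : Set.Icc (((i:ℝ) - 1) / n) ((i:ℝ) / n) ⊆ Set.Icc 0 1 := Set.Icc_subset_Icc h0 h1
    have hKM : 0 ≤ 2 * K * M := by
      have := hs.abs_sq_sub_sq_le hκ (x := 1) (y := 0) (by simp) (by simp)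
      simpa using (abs_nonneg _).trans this
    have hdev : ∀ x ∈ Set.Icc (((i:ℝ) - 1) / n) ((i:ℝ) / n),
        |g x - g (((i:ℝ) - 1) / n)| ≤ 4 * K * M / n := by
      intro x hx
      have hl := hsub (Set.left_mem_Icc.2 hlt.le)
      have e0 := hs0.abs_sq_sub_sq_le hκ (hsub hx) hl
      have e1 := hs.abs_sq_sub_sq_le hκ (hsub hx) hl
      have hd : |x - ((i:ℝ) - 1) / n| ≤ 1 / n := by
        rw [abs_of_nonneg (by linarith [hx.1])]; linarith [hx.2]
      have hd' := mul_le_mul_of_nonneg_left hd hKM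
      have hsplit : g x - g (((i:ℝ) - 1) / n)
          = ((s0 x) ^ 2 - (s0 (((i:ℝ) - 1) / n)) ^ 2)
            - ((s x) ^ 2 - (s (((i:ℝ) - 1) / n)) ^ 2) := by
        simp only [hgdef]; ring
      have hdouble : 4 * K * M / n = 2 * K * M * (1 / n) + 2 * K * M * (1 / n) := by ring
      rw [hsplit, hdouble]
      exact (abs_sub _ _).trans (by linarith)
    have h := cell_integral_sq_le hlt (hg.mono hsub) hdev
    have hdiff : ∫ u in ((i:ℝ) - 1) / n..(i:ℝ) / n, g u = vin s0 n i - vin s n i := by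
      unfold vin
      rw [← intervalIntegral.integral_sub] <;>
      · apply ContinuousOn.intervalIntegrable
        rw [Set.uIcc_of_le hlt.le]
        first
          | exact (hc0.mono hsub).pow 2
          | exact (hc.mono hsub).pow 2
    rw [hdiff, hlen] at h
    have h' := mul_le_mul_of_nonneg_left h (sq_nonneg (n:ℝ))
    calc _ = (n:ℝ) ^ 2 * (1 / n * ∫ u in ((i:ℝ) - 1) / n..(i:ℝ) / n, (g u) ^ 2) := by field_simp
      _ ≤ _ := h'
      _ = _ := by field_simp
  have hadj : ∑ i ∈ Finset.Icc 1 n, ∫ u in ((i:ℝ) - 1) / n..(i:ℝ) / n, (g u) ^ 2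
      = ∫ u in (0:ℝ)..1, (g u) ^ 2 := by
    have h := intervalIntegral.sum_integral_adjacent_intervals (μ := volume)
      (f := fun u => (g u) ^ 2) (a := fun k : ℕ => (k:ℝ) / n) (n := n) (by
        intro k hk
        obtain ⟨h0, hlt, h1, -⟩ := cell_bounds (n := n) (i := k + 1)
          (Finset.mem_Icc.2 ⟨by omega, by omega⟩)
        apply ContinuousOn.intervalIntegrable
        simp only [Nat.cast_add, Nat.cast_one, add_sub_cancel_right] at h0 hlt h1 ⊢
        rw [Set.uIcc_of_le hlt.le]
        exact (hg.mono (Set.Icc_subset_Icc h0 h1)).pow 2)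
    simp only [Nat.cast_zero, zero_div, div_self hn0.ne'] at h
    have hIcc : Finset.Icc 1 n = Finset.Ico (0 + 1) (n + 1) := by
      ext k
      simp only [Finset.mem_Icc, Finset.mem_Ico]
      omega
    rw [← h, Finset.range_eq_Ico, hIcc, ← Finset.sum_Ico_add']
    simp
  have hsum := Finset.sum_le_sum hcell
  rw [← Finset.mul_sum, hadj, Finset.sum_add_distrib, ← Finset.mul_sum, Finset.sum_const,
    Nat.card_Icc, Nat.add_sub_cancel, nsmul_eq_mul] at hsum
  have herr : (n:ℝ) * ((4 * K * M) ^ 2 / (n:ℝ) ^ 2) ≤ (4 * K * M) ^ 2 := by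
    have : (n:ℝ) * ((4 * K * M) ^ 2 / (n:ℝ) ^ 2) = (4 * K * M) ^ 2 / n := by field_simp
    rw [this]
    exact div_le_self (sq_nonneg _) hn1
  have hL2 : 4 * κ ^ 2 * l2DistSq s s0 ≤ ∫ u in (0:ℝ)..1, (g u) ^ 2 := by
    unfold l2DistSq
    rw [← intervalIntegral.integral_const_mul]
    refine intervalIntegral.integral_mono_on zero_le_one ?_ ?_ ?_
    · apply ContinuousOn.intervalIntegrable
      rw [Set.uIcc_of_le zero_le_one]
      exact continuousOn_const.mul ((hc.sub hc0).pow 2)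
    · apply ContinuousOn.intervalIntegrable
      rw [Set.uIcc_of_le zero_le_one]
      exact hg.pow 2
    · intro u hu
      have h2 : (2 * κ) ^ 2 ≤ (s u + s0 u) ^ 2 :=
        pow_le_pow_left₀ (by linarith) (by linarith [(hs.1 u hu).1, (hs0.1 u hu).1]) 2
      calc 4 * κ ^ 2 * (s u - s0 u) ^ 2 = (2 * κ) ^ 2 * (s u - s0 u) ^ 2 := by ring
        _ ≤ (s u + s0 u) ^ 2 * (s u - s0 u) ^ 2 := mul_le_mul_of_nonneg_right h2 (sq_nonneg _)
        _ = (g u) ^ 2 := by simp only [hgdef]; ring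
  nlinarith [mul_le_mul_of_nonneg_left hL2 hn0.le]

theorem statement4 (κ K M : ℝ) (hκ : 0 < κ) (hκK : κ < K) (hM : 0 < M)
    (s0 : ℝ → ℝ) (hs0 : memX κ K M s0)
    (εn : ℕ → ℝ) (hrate : rateCond εn) :
    ∃ c0 C0 : ℝ, 0 < c0 ∧ 0 < C0 ∧ ∃ N : ℕ, ∀ n : ℕ, N ≤ n →
      ∀ j : ℕ, j ≤ Meps K (εn n) →
        ∀ s : ℝ → ℝ, memX κ K M s →
          (2:ℝ)^j * (εn n)^2 ≤ l2DistSq s s0 → l2DistSq s s0 < (2:ℝ)^(j+1) * (εn n)^2 →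
            ∑ i ∈ Finset.Icc 1 n,
                ∫ y, Real.log (gaussDensity (vin s n i) y / gaussDensity (vin s0 n i) y)
                  ∂(gaussianReal 0 (Real.toNNReal (vin s0 n i)))
              ≤ -(c0 * κ^2 / K^4) * (2:ℝ)^j * (εn n)^2 * n + C0 := by
  have hK : 0 < K := hκ.trans hκK
  refine ⟨1 / 2, (4 * K * M) ^ 2 / (8 * K ^ 4), by norm_num, by positivity, 1, ?_⟩
  intro n hn j _ s hs hlow _
  have hn0 : (0:ℝ) < n := by exact_mod_cast hn
  have hterm : ∀ i ∈ Finset.Icc 1 n,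
      ∫ y, Real.log (gaussDensity (vin s n i) y / gaussDensity (vin s0 n i) y)
          ∂(gaussianReal 0 (Real.toNNReal (vin s0 n i)))
        ≤ -((n:ℝ) ^ 2 / (8 * K ^ 4)) * (vin s0 n i - vin s n i) ^ 2 := by
    intro i hi
    obtain ⟨hv, hvB⟩ := hs.vin_bounds hκ hi
    obtain ⟨hw, hwB⟩ := hs0.vin_bounds hκ hi
    rw [integral_log_gaussDensity_div hv hw]
    exact (kl_le hv hw hvB hwB).trans_eq (by field_simp)
  refine (Finset.sum_le_sum hterm).trans ?_
  rw [← Finset.mul_sum]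
  have hmain := le_sum_sq_vin_sub hκ hs hs0 hn
  have hlow' : 4 * κ ^ 2 * ((2:ℝ) ^ j * (εn n) ^ 2) * n ≤ 4 * κ ^ 2 * l2DistSq s s0 * n := by
    gcongr
  have hfin := div_le_div_of_nonneg_right
    ((sub_le_sub_right hlow' ((4 * K * M) ^ 2)).trans hmain) (by positivity : 0 ≤ 8 * K ^ 4)
  calc _ = -(((n:ℝ) ^ 2 * ∑ i ∈ Finset.Icc 1 n, (vin s0 n i - vin s n i) ^ 2) / (8 * K ^ 4)) := by
        ring
    _ ≤ -((4 * κ ^ 2 * ((2:ℝ) ^ j * (εn n) ^ 2) * n - (4 * K * M) ^ 2) / (8 * K ^ 4)) :=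
        neg_le_neg hfin
    _ = _ := by
        field_simp
        ring
end
end

section
/- (Denominator bound in the proof of the main theorem.) Suppose the prior satisfies Π({s ∈ 𝒳 : ‖s − s0‖_∞ < ε̃_n}) ≥ c·exp(−C̄·n·ε̃_n²) for constants c, C̄ > 0. Then there is a constant C′ > 0 such that, with probability tending to one under ℙ_{s0} as n → ∞, ∫_{{s ∈ 𝒳 : ‖s−s0‖_∞ < ε̃_n}} ∏_{i=1}^n ( p_{i,n,s}(Y_{i,n}) / p_{i,n,0}(Y_{i,n}) ) Π(ds) ≥ C′·exp( −(8K²/κ⁴ + C̄)·n·ε̃_n² ). -/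
/-!
Write `A` for the sup-norm ball of radius `ε` around `s0`, `δ = 2 K ε / κ²`, and `r_i = v_i(s0) / v_i(s)`.
For `s ∈ A` one has `|r_i - 1| ≤ δ`, and the log-likelihood ratio equals
`∑ (log r_i - (r_i - 1)) / 2 - ∑ w_i (r_i - 1) / 2` with `w_i = Y_i² / v_i(s0) - 1`. The first sum is
at least `-n δ² / 2` because `r - 1 - log r ≤ (r - 1)² / r` (`likRatio_bounds`). Jensen's inequality
for `Π` restricted to `A` (`mass_mul_exp_average_le`) then gives
`∫_A (likelihood ratio) dΠ ≥ Π(A) exp (-n δ² / 2 - ∑ w_i β_i)`, where `β_i` is the average of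
`(r_i - 1) / 2` over `A`, so `|β_i| ≤ δ / 2` and `β` is not random. The `w_i` are independent, centred
and have a common variance, so by Chebyshev (`chebyshev_weighted_squares`) `|∑ w_i β_i| < 3 n δ² / 2`
outside an event of probability of order `1 / (n δ²)`, which vanishes since `n ε² → ∞`. On the
remaining event the exponent is at least `-2 n δ² = -8 K² / κ⁴ · n ε²`, and `C' = c` works.

The σ-algebra on functions is only known to make the likelihood ratios measurable, and `A` itself
need not be measurable. The `r_i` are measurable because they can be read off from likelihood ratios
(`ratio_eq_log_likRatio`), and that is enough.
-/

noncomputable section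
open MeasureTheory ProbabilityTheory Real Filter

/-! ### Jensen's inequality -/

/-- Jensen's inequality in the form used here: a function bounded below by `exp (-B - ∑ w i * H i)`
has integral at least the mass of `ν` times the exponential of the `ν`-average of the exponent. -/
lemma mass_mul_exp_average_le {S : Type*} [MeasurableSpace S] (ν : Measure S) [IsFiniteMeasure ν]
    (hm : 0 < ν.real Set.univ) {n : ℕ} (H : Fin n → S → ℝ) (hH : ∀ i, Integrable (H i) ν)
    (R : S → ℝ) (hR : Integrable R ν) (w : Fin n → ℝ) (B : ℝ)
    (hle : ∀ᵐ s ∂ν, Real.exp (-B - ∑ i, w i * H i s) ≤ R s) :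
    ν.real Set.univ * Real.exp (-B - ∑ i, w i * ((∫ s, H i s ∂ν) / ν.real Set.univ))
      ≤ ∫ s, R s ∂ν := by
  set m := ν.real Set.univ with hmdef
  set Z := -B - ∑ i, w i * ((∫ s, H i s ∂ν) / m) with hZ
  have hint : Integrable (fun s => ∑ i, w i * H i s) ν :=
    integrable_finsetSum _ fun i _ => (hH i).const_mul _
  have hlin : Integrable (fun s => 1 + (-B - ∑ i, w i * H i s) - Z) ν :=
    ((integrable_const (1 : ℝ)).add ((integrable_const (-B)).sub hint)).sub (integrable_const Z)
  have hval : ∫ s, (1 + (-B - ∑ i, w i * H i s) - Z) ∂ν = m := by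
    have e1 : ∫ s, (∑ i, w i * H i s) ∂ν = ∑ i, w i * ∫ s, H i s ∂ν := by
      rw [integral_finsetSum _ fun i _ => (hH i).const_mul _]
      simp_rw [integral_const_mul]
    have e2 : ∫ s, (1 + (-B - ∑ i, w i * H i s) - Z) ∂ν
        = ∫ s, ((1 - B - Z) - ∑ i, w i * H i s) ∂ν := by
      congr 1; ext s; ring
    rw [e2, integral_sub (integrable_const _) hint, e1, integral_const, hZ, smul_eq_mul, ← hmdef]
    have e3 : ∑ i, w i * ((∫ s, H i s ∂ν) / m) = (∑ i, w i * ∫ s, H i s ∂ν) / m := by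
      rw [Finset.sum_div]; exact Finset.sum_congr rfl fun i _ => by ring
    rw [e3]; field_simp; ring
  calc m * Real.exp Z = ∫ s, Real.exp Z * (1 + (-B - ∑ i, w i * H i s) - Z) ∂ν := by
        rw [integral_const_mul, hval, mul_comm]
    _ ≤ ∫ s, R s ∂ν := by
        refine integral_mono_ae (hlin.const_mul _) hR ?_
        filter_upwards [hle] with s hs
        refine le_trans ?_ hs
        -- the tangent-line bound `1 + t ≤ exp t` at `t = (exponent) - Z`
        have h1 := Real.add_one_le_exp ((-B - ∑ i, w i * H i s) - Z)
        calc Real.exp Z * (1 + (-B - ∑ i, w i * H i s) - Z)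
            ≤ Real.exp Z * Real.exp ((-B - ∑ i, w i * H i s) - Z) := by
              gcongr; linarith
          _ = _ := by rw [← Real.exp_add]; congr 1; ring

/-! ### Concentration of weighted sums of squared Gaussians -/

/-- The variance of the square of a standard normal variable (its value is `2`, but only its
finiteness matters). -/
def varSq : ℝ := Var[fun x => x ^ 2; gaussianReal 0 1]

lemma memLp_sq_gaussianReal (v : NNReal) :
    MemLp (fun x : ℝ => x ^ 2) 2 (gaussianReal 0 v) := by
  rw [memLp_two_iff_integrable_sq (by fun_prop)]
  have h := (memLp_id_gaussianReal (μ := 0) (v := v) 4).integrable_norm_pow (by norm_num)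
  refine h.congr (ae_of_all _ fun x => ?_)
  simp only [id, Real.norm_eq_abs]
  rw [show |x| ^ 4 = (|x| ^ 2) ^ 2 by ring, sq_abs]

lemma integral_sq_gaussianReal (v : NNReal) : ∫ x, x ^ 2 ∂gaussianReal 0 v = v := by
  have h := variance_id_gaussianReal (μ := 0) (v := v)
  rw [variance_eq_sub (memLp_id_gaussianReal (μ := 0) (v := v) 2)] at h
  simpa using h

lemma variance_sq_div {v : ℝ} (hv : 0 < v) :
    Var[fun y => y ^ 2 / v; gaussianReal 0 (Real.toNNReal v)] = varSq := by
  have hmap : (gaussianReal 0 (Real.toNNReal v)).map (fun x => x / Real.sqrt v)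
      = gaussianReal 0 1 := by
    rw [gaussianReal_map_div_const, zero_div]
    congr 1
    ext
    simp [Real.sq_sqrt hv.le, Real.coe_toNNReal v hv.le, hv.ne']
  rw [varSq, ← hmap, variance_map (by fun_prop) (by fun_prop)]
  congr 1
  ext y
  simp [div_pow, Real.sq_sqrt hv.le]

/-- Chebyshev's inequality for a weighted sum of centred normalised squares. -/
lemma chebyshev_weighted_squares {n : ℕ} (v : Fin n → ℝ) (hv : ∀ i, 0 < v i) (β : Fin n → ℝ) (d : ℝ)
    (hβ : ∀ i, |β i| ≤ d) (t : ℝ) (ht : 0 < t) :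
    Measure.pi (fun i => gaussianReal 0 (Real.toNNReal (v i)))
      {y : Fin n → ℝ | t ≤ |∑ i, (y i ^ 2 / v i - 1) * β i|}
      ≤ ENNReal.ofReal (n * d ^ 2 * varSq / t ^ 2) := by
  set P := Measure.pi (fun i => gaussianReal 0 (Real.toNNReal (v i))) with hP
  let X : Fin n → ℝ → ℝ := fun i x => β i * (x ^ 2 / v i)
  have hX : ∀ i, MemLp (X i) 2 (gaussianReal 0 (Real.toNNReal (v i))) := fun i =>
    ((memLp_sq_gaussianReal _).mul_const (v i)⁻¹).const_mul (β i)
  have hXe : ∀ i, MemLp (fun y : Fin n → ℝ => X i (y i)) 2 P := fun i =>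
    (hX i).comp_measurePreserving (measurePreserving_eval _ i)
  have hsum : MemLp (∑ i, fun y : Fin n → ℝ => X i (y i)) 2 P :=
    memLp_finsetSum' _ fun i _ => hXe i
  have hvar : Var[∑ i, fun y : Fin n → ℝ => X i (y i); P] ≤ n * d ^ 2 * varSq := by
    rw [variance_sum_pi hX]
    have hb : ∀ i ∈ Finset.univ, Var[X i; gaussianReal 0 (Real.toNNReal (v i))] ≤ d ^ 2 * varSq := by
      intro i _
      rw [variance_const_mul, variance_sq_div (hv i)]
      refine mul_le_mul_of_nonneg_right ?_ (variance_nonneg _ _)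
      rw [← sq_abs]
      exact pow_le_pow_left₀ (abs_nonneg _) (hβ i) 2
    refine (Finset.sum_le_sum hb).trans ?_
    simp [mul_assoc]
  have hmean : ∫ y, (∑ i, fun y : Fin n → ℝ => X i (y i)) y ∂P = ∑ i, β i := by
    simp only [Finset.sum_apply]
    rw [integral_finsetSum _ fun i _ => (hXe i).integrable (by norm_num)]
    refine Finset.sum_congr rfl fun i _ => ?_
    rw [hP, integral_comp_eval (μ := fun i => gaussianReal 0 (Real.toNNReal (v i)))
      (hX i).aestronglyMeasurable]
    simp only [X]
    rw [integral_const_mul, integral_div, integral_sq_gaussianReal, Real.coe_toNNReal _ (hv i).le,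
      div_self (hv i).ne', mul_one]
  have hch := meas_ge_le_variance_div_sq hsum ht
  rw [hmean] at hch
  have hset : {y : Fin n → ℝ | t ≤ |∑ i, (y i ^ 2 / v i - 1) * β i|}
      = {y | t ≤ |(∑ i, fun y : Fin n → ℝ => X i (y i)) y - ∑ i, β i|} := by
    ext y
    simp only [Set.mem_ofPred_eq, Finset.sum_apply, X, ← Finset.sum_sub_distrib]
    rw [Finset.sum_congr rfl fun i _ =>
      show (y i ^ 2 / v i - 1) * β i = β i * (y i ^ 2 / v i) - β i by ring]
  rw [hset]
  refine hch.trans (ENNReal.ofReal_le_ofReal ?_)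
  gcongr

/-! ### Variances of the observations on the sup-norm ball -/

lemma abs_sub_le_supDist {κ K M : ℝ} {s t : ℝ → ℝ} (hs : memX κ K M s) (ht : memX κ K M t)
    {u : ℝ} (hu : u ∈ Set.Icc (0 : ℝ) 1) : |s u - t u| ≤ supDist s t := by
  refine le_ciSup (f := fun u : Set.Icc (0 : ℝ) 1 => |s u.1 - t u.1|) ⟨K - κ, ?_⟩ ⟨u, hu⟩
  rintro _ ⟨x, rfl⟩
  have h1 := hs.1 x.1 x.2
  have h2 := ht.1 x.1 x.2
  simp only [Set.mem_Icc] at h1 h2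
  rw [abs_le]; constructor <;> linarith

/-- The observation indexed by `i : Fin n` lives on `[i / n, (i + 1) / n]`, an interval of length
`1 / n` inside `[0,1]`. -/
lemma cell_subset {n : ℕ} (i : Fin n) :
    (((i.1 + 1 : ℕ) : ℝ) - 1) / n ≤ ((i.1 + 1 : ℕ) : ℝ) / n ∧
    ((i.1 + 1 : ℕ) : ℝ) / n - (((i.1 + 1 : ℕ) : ℝ) - 1) / n = 1 / n ∧
    Set.Icc ((((i.1 + 1 : ℕ) : ℝ) - 1) / n) (((i.1 + 1 : ℕ) : ℝ) / n) ⊆ Set.Icc 0 1 := by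
  have hn : (0 : ℝ) < n := by exact_mod_cast Fin.pos i
  have hi : (i.1 : ℝ) + 1 ≤ n := by exact_mod_cast i.2
  push_cast
  refine ⟨by gcongr; linarith, by ring, Set.Icc_subset_Icc ?_ ?_⟩
  · rw [add_sub_cancel_right]; positivity
  · rwa [div_le_one hn]

lemma intervalIntegrable_sq {κ K M : ℝ} {s : ℝ → ℝ} (hs : memX κ K M s) {n : ℕ} (i : Fin n) :
    IntervalIntegrable (fun u => s u ^ 2) volume
      ((((i.1 + 1 : ℕ) : ℝ) - 1) / n) (((i.1 + 1 : ℕ) : ℝ) / n) := by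
  apply ContinuousOn.intervalIntegrable
  rw [Set.uIcc_of_le (cell_subset i).1]
  exact (hs.2.1.continuousOn.mono (cell_subset i).2.2).pow 2

lemma vin_lower {κ K M : ℝ} (hκ : 0 < κ) {s : ℝ → ℝ} (hs : memX κ K M s) {n : ℕ} (i : Fin n) :
    κ ^ 2 / n ≤ vin s n (i.1 + 1) := by
  obtain ⟨h1, h2, h3⟩ := cell_subset i
  have := intervalIntegral.integral_mono_on h1
    (intervalIntegrable_const (c := κ ^ 2)) (intervalIntegrable_sq hs i) (fun u hu => by
      have := (hs.1 u (h3 hu)).1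
      gcongr)
  rw [intervalIntegral.integral_const, h2, smul_eq_mul] at this
  calc κ ^ 2 / n = 1 / n * κ ^ 2 := by ring
    _ ≤ _ := this

lemma vin_sub {κ K M : ℝ} (hκ : 0 < κ) {s s0 : ℝ → ℝ} (hs : memX κ K M s) (hs0 : memX κ K M s0)
    {ε : ℝ} (hd : supDist s s0 < ε) {n : ℕ} (i : Fin n) :
    |vin s0 n (i.1 + 1) - vin s n (i.1 + 1)| ≤ 2 * K * ε / n := by
  obtain ⟨h1, h2, h3⟩ := cell_subset i
  rw [vin, vin, ← intervalIntegral.integral_sub (intervalIntegrable_sq hs0 i)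
    (intervalIntegrable_sq hs i)]
  have := intervalIntegral.norm_integral_le_of_norm_le_const (C := 2 * K * ε)
    (f := fun u => s0 u ^ 2 - s u ^ 2) (a := (((i.1 + 1 : ℕ) : ℝ) - 1) / n)
    (b := ((i.1 + 1 : ℕ) : ℝ) / n) (fun u hu => by
      rw [Set.uIoc_of_le h1] at hu
      have hu' := h3 (Set.Ioc_subset_Icc_self hu)
      have ha := hs.1 u hu'
      have hb := hs0.1 u hu'
      have hc := abs_sub_le_supDist hs hs0 hu'
      rw [Set.mem_Icc] at ha hb
      rw [Real.norm_eq_abs, show s0 u ^ 2 - s u ^ 2 = (s0 u + s u) * (s0 u - s u) by ring, abs_mul,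
        abs_of_pos (by linarith : 0 < s0 u + s u), abs_sub_comm (s0 u)]
      exact mul_le_mul (by linarith) (by linarith) (abs_nonneg _) (by linarith))
  rw [h2, abs_of_nonneg (by positivity), Real.norm_eq_abs] at this
  calc _ ≤ _ := this
    _ = _ := by ring

/-! ### The likelihood ratio on the sup-norm ball -/

lemma gaussDensity_ratio {v v0 : ℝ} (hv : 0 < v) (hv0 : 0 < v0) (y : ℝ) :
    gaussDensity v y / gaussDensity v0 y
      = Real.exp (Real.log (v0 / v) / 2 - y ^ 2 / v0 * ((v0 / v - 1) / 2)) := by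
  have hπ := Real.pi_pos
  have e1 : Real.exp (Real.log (v0 / v) / 2) = Real.sqrt (2 * π * v0) / Real.sqrt (2 * π * v) := by
    rw [← Real.sqrt_div (by positivity), Real.sqrt_eq_rpow, Real.rpow_def_of_pos (by positivity),
      mul_div_mul_left _ _ (by positivity)]
    congr 1; ring
  rw [sub_eq_add_neg, Real.exp_add, e1, gaussDensity, gaussDensity, mul_div_mul_comm, ← Real.exp_sub]
  congr 1
  · rw [inv_div_inv]
  · congr 1; field_simp; ring

/-- The Kullback–Leibler bound and the relative-error bound for a single observation. The former
comes from `r - 1 - log r ≤ (r - 1)² / r` with `r = v0 / v`, and from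
`(r - 1)² / r = (v0 - v)² / (v * v0)`. -/
lemma sub_one_sub_log_le {v v0 κ Δ N : ℝ} (hκ : 0 < κ) (hN : 0 < N) (hv : κ ^ 2 / N ≤ v)
    (hv0 : κ ^ 2 / N ≤ v0) (hd : |v0 - v| ≤ Δ / N) :
    (v0 / v - 1) - Real.log (v0 / v) ≤ (Δ / κ ^ 2) ^ 2 ∧ |v0 / v - 1| ≤ Δ / κ ^ 2 := by
  have hpos : 0 < κ ^ 2 / N := by positivity
  have hvp : 0 < v := hpos.trans_le hv
  have hv0p : 0 < v0 := hpos.trans_le hv0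
  have key : Δ / κ ^ 2 = (Δ / N) / (κ ^ 2 / N) := by field_simp
  have hΔ : 0 ≤ Δ / N := (abs_nonneg _).trans hd
  constructor
  · have hl := Real.log_le_sub_one_of_pos (div_pos hvp hv0p)
    rw [← inv_div v0 v, Real.log_inv, inv_div] at hl
    calc (v0 / v - 1) - Real.log (v0 / v) ≤ v0 / v - 1 + (v / v0 - 1) := by linarith
      _ = |v0 - v| ^ 2 / (v * v0) := by rw [sq_abs]; field_simp; ring
      _ ≤ (Δ / N) ^ 2 / ((κ ^ 2 / N) * (κ ^ 2 / N)) := by gcongr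
      _ = _ := by rw [key, div_pow]; ring
  · rw [div_sub_one hvp.ne', abs_div, abs_of_pos hvp, key]
    gcongr

/-- On the neighbourhood of `s0`, the likelihood ratio is the exponential of a linear functional of
the centred normalised squares, up to a factor between `exp (-n δ² / 2)` and `1`,
where `δ = 2 K ε / κ²`. -/
lemma likRatio_bounds {κ K M : ℝ} (hκ : 0 < κ) {s s0 : ℝ → ℝ} (hs : memX κ K M s)
    (hs0 : memX κ K M s0) {ε : ℝ} (hd : supDist s s0 < ε) {n : ℕ} (y : Fin n → ℝ) :
    Real.exp (-(n * (2 * K * ε / κ ^ 2) ^ 2 / 2) - ∑ i : Fin n, (y i ^ 2 / vin s0 n (i.1 + 1) - 1) *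
        ((vin s0 n (i.1 + 1) / vin s n (i.1 + 1) - 1) / 2)) ≤ likRatio s0 s n y ∧
    likRatio s0 s n y ≤ Real.exp (- ∑ i : Fin n, (y i ^ 2 / vin s0 n (i.1 + 1) - 1) *
        ((vin s0 n (i.1 + 1) / vin s n (i.1 + 1) - 1) / 2)) := by
  have hpos : ∀ (i : Fin n) {t : ℝ → ℝ}, memX κ K M t → 0 < vin t n (i.1 + 1) := fun i t ht => by
    have hn : (0 : ℝ) < n := by exact_mod_cast Fin.pos i
    exact lt_of_lt_of_le (by positivity) (vin_lower hκ ht i)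
  have hR : likRatio s0 s n y = Real.exp (∑ i : Fin n,
      (Real.log (vin s0 n (i.1 + 1) / vin s n (i.1 + 1)) / 2 - y i ^ 2 / vin s0 n (i.1 + 1) *
        ((vin s0 n (i.1 + 1) / vin s n (i.1 + 1) - 1) / 2))) := by
    rw [likRatio, Real.exp_sum]
    exact Finset.prod_congr rfl fun i _ => gaussDensity_ratio (hpos i hs) (hpos i hs0) _
  have hkl : ∀ i : Fin n, _ := fun i => (sub_one_sub_log_le (Δ := 2 * K * ε) hκ
    (by exact_mod_cast Fin.pos i : (0 : ℝ) < n)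
    (vin_lower hκ hs i) (vin_lower hκ hs0 i) (vin_sub hκ hs hs0 hd i)).1
  rw [hR]
  constructor
  · rw [Real.exp_le_exp]
    have e : -(n * (2 * K * ε / κ ^ 2) ^ 2 / 2) = ∑ _i : Fin n, -((2 * K * ε / κ ^ 2) ^ 2 / 2) := by
      simp; ring
    rw [e, ← Finset.sum_sub_distrib]
    refine Finset.sum_le_sum fun i _ => ?_
    have := hkl i
    linarith
  · rw [Real.exp_le_exp, ← Finset.sum_neg_distrib]
    refine Finset.sum_le_sum fun i _ => ?_
    have := Real.log_le_sub_one_of_pos (div_pos (hpos i hs0) (hpos i hs))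
    linarith

/-- Comparing observations `e_i` and `0` recovers `v_i(s0) / v_i(s)` from the likelihood ratio;
hence this quantity is a measurable function of `s` on the neighbourhood, whatever the σ-algebra
making the likelihood ratios measurable. -/
lemma ratio_eq_log_likRatio {κ K M : ℝ} (hκ : 0 < κ) {s s0 : ℝ → ℝ} (hs : memX κ K M s)
    (hs0 : memX κ K M s0) {n : ℕ} (i : Fin n) :
    -vin s0 n (i.1 + 1) * Real.log (likRatio s0 s n (Pi.single i 1) / likRatio s0 s n 0)
      = (vin s0 n (i.1 + 1) / vin s n (i.1 + 1) - 1) / 2 := by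
  have hpos : ∀ (i : Fin n) {t : ℝ → ℝ}, memX κ K M t → 0 < vin t n (i.1 + 1) := fun i t ht => by
    have hn : (0 : ℝ) < n := by exact_mod_cast Fin.pos i
    exact lt_of_lt_of_le (by positivity) (vin_lower hκ ht i)
  have hR : ∀ y, likRatio s0 s n y = Real.exp (∑ i : Fin n,
      (Real.log (vin s0 n (i.1 + 1) / vin s n (i.1 + 1)) / 2 - y i ^ 2 / vin s0 n (i.1 + 1) *
        ((vin s0 n (i.1 + 1) / vin s n (i.1 + 1) - 1) / 2))) := fun y => by
    rw [likRatio, Real.exp_sum]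
    exact Finset.prod_congr rfl fun i _ => gaussDensity_ratio (hpos i hs) (hpos i hs0) _
  rw [hR, hR, ← Real.exp_sub, Real.log_exp, ← Finset.sum_sub_distrib,
    Finset.sum_eq_single i (fun j _ hj => by simp [Pi.single_eq_of_ne hj]) (by simp)]
  have := (hpos i hs0).ne'
  simp only [Pi.single_eq_same, Pi.zero_apply]
  field_simp
  ring

/-! ### The rate and the denominator bound -/

lemma tendsto_mul_sq_of_rateCond {ε : ℕ → ℝ} (h : rateCond ε) :
    Tendsto (fun n : ℕ => (n : ℝ) * ε n ^ 2) atTop atTop := by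
  obtain ⟨-, a, b, ha, -, hab⟩ := h
  have hlim : Tendsto (fun n : ℕ => a ^ 2 * (n : ℝ) ^ ((1 : ℝ) / 3)) atTop atTop :=
    ((tendsto_rpow_atTop (by norm_num)).comp tendsto_natCast_atTop_atTop).const_mul_atTop
      (by positivity)
  refine tendsto_atTop_mono' _ ?_ hlim
  filter_upwards [eventually_ge_atTop 3] with n hn
  have hn0 : (0 : ℝ) < n := by exact_mod_cast (by omega : 0 < n)
  have hlog : 1 ≤ Real.log n := by
    rw [Real.le_log_iff_exp_le hn0]
    have : (3 : ℝ) ≤ n := by exact_mod_cast hn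
    linarith [Real.exp_one_lt_d9]
  have hε : a * (n : ℝ) ^ (-(1 : ℝ) / 3) ≤ ε n :=
    (le_mul_of_one_le_right (by positivity) hlog).trans (hab n (by omega)).1
  calc a ^ 2 * (n : ℝ) ^ ((1 : ℝ) / 3) = n * (a * (n : ℝ) ^ (-(1 : ℝ) / 3)) ^ 2 := by
        rw [mul_pow, ← Real.rpow_natCast (_ ^ _), ← Real.rpow_mul hn0.le]
        nth_rewrite 2 [← Real.rpow_one (n : ℝ)]
        rw [mul_left_comm, ← Real.rpow_add hn0]
        norm_num
    _ ≤ n * ε n ^ 2 := by gcongr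

theorem statement5 (κ K M : ℝ) (hκ : 0 < κ) (hκK : κ < K) (hM : 0 < M)
    (s0 : ℝ → ℝ) (hs0 : memX κ K M s0)
    (mF : MeasurableSpace (ℝ → ℝ)) (pr : @MeasureTheory.Measure (ℝ → ℝ) mF)
    (hpr : IsProbabilityMeasure pr)
    (hmeas : ∀ (n : ℕ) (y : Fin n → ℝ),
      @Measurable _ _ mF _ (fun s : ℝ → ℝ => likRatio s0 s n y))
    (εt : ℕ → ℝ) (hrate : rateCond εt)
    (c Cbar : ℝ) (hc : 0 < c) (hCbar : 0 < Cbar)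
    (hprior : ∀ n : ℕ,
      ENNReal.ofReal (c * Real.exp (-Cbar * n * (εt n)^2))
        ≤ pr {s : ℝ → ℝ | memX κ K M s ∧ supDist s s0 < εt n}) :
    ∃ C' : ℝ, 0 < C' ∧
      Filter.Tendsto (fun n : ℕ =>
        jointLaw s0 n {y : Fin n → ℝ |
          C' * Real.exp (-(8 * K^2 / κ^4 + Cbar) * n * (εt n)^2)
            ≤ ∫ s in {s : ℝ → ℝ | memX κ K M s ∧ supDist s s0 < εt n},
                likRatio s0 s n y ∂pr})
        atTop (nhds 1) := by
  refine ⟨c, hc, ?_⟩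
  have hK : 0 < K := hκ.trans hκK
  set δ : ℕ → ℝ := fun n => 2 * K * εt n / κ ^ 2 with hδ
  have hδpos : ∀ n, 0 < δ n := fun n => by have := hrate.1 n; positivity
  have hprob : ∀ n, IsProbabilityMeasure (jointLaw s0 n) := fun n => by
    unfold jointLaw; infer_instance
  -- Chebyshev's bound with deviation `3 n δ² / 2` and weights at most `δ / 2` is `varSq / (9 n δ²)`.
  have hbound : Tendsto (fun n : ℕ => 1 - ENNReal.ofReal
      (n * (δ n / 2) ^ 2 * varSq / (3 * n * δ n ^ 2 / 2) ^ 2)) atTop (nhds 1) := by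
    have h0 : Tendsto (fun n : ℕ => n * (δ n / 2) ^ 2 * varSq / (3 * n * δ n ^ 2 / 2) ^ 2)
        atTop (nhds 0) := by
      have h1 : Tendsto (fun n : ℕ => (varSq * κ ^ 4 / (36 * K ^ 2)) / (n * εt n ^ 2))
          atTop (nhds 0) := (tendsto_mul_sq_of_rateCond hrate).const_div_atTop _
      refine h1.congr' ?_
      filter_upwards [eventually_ge_atTop 1] with n hn
      have hn0 : (0 : ℝ) < n := by exact_mod_cast hn
      have := hrate.1 n
      simp only [hδ]
      field_simp
      ring
    have h2 := ENNReal.tendsto_ofReal h0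
    rw [ENNReal.ofReal_zero] at h2
    simpa using ENNReal.Tendsto.sub (tendsto_const_nhds (x := (1 : ENNReal))) h2 (by simp)
  refine tendsto_of_tendsto_of_tendsto_of_le_of_le' hbound tendsto_const_nhds ?_
    (Eventually.of_forall fun n => prob_le_one)
  filter_upwards [eventually_ge_atTop 1] with n hn
  have hn0 : (0 : ℝ) < n := by exact_mod_cast hn
  set A : Set (ℝ → ℝ) := {s : ℝ → ℝ | memX κ K M s ∧ supDist s s0 < εt n} with hA
  set ν := pr.restrict A with hν
  have hmass : c * Real.exp (-Cbar * n * (εt n) ^ 2) ≤ ν.real Set.univ := by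
    rw [hν, measureReal_restrict_apply_univ, measureReal_def]
    exact (ENNReal.ofReal_le_iff_le_toReal (measure_ne_top _ _)).1 (hprior n)
  have hm : 0 < ν.real Set.univ := lt_of_lt_of_le (by positivity) hmass
  have hvpos : ∀ i : Fin n, 0 < vin s0 n (i.1 + 1) := fun i =>
    lt_of_lt_of_le (by positivity) (vin_lower hκ hs0 i)
  let H : Fin n → (ℝ → ℝ) → ℝ := fun i s =>
    -vin s0 n (i.1 + 1) * Real.log (likRatio s0 s n (Pi.single i 1) / likRatio s0 s n 0)
  have hHmeas : ∀ i, Measurable[mF] (H i) := fun i =>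
    (Real.measurable_log.comp ((hmeas n _).div (hmeas n _))).const_mul _
  have hHA : ∀ s ∈ A, ∀ i, H i s = (vin s0 n (i.1 + 1) / vin s n (i.1 + 1) - 1) / 2 :=
    fun s hs i => ratio_eq_log_likRatio hκ hs.1 hs0 i
  -- `A` need not be measurable, so properties are transferred from `A` to `ν`-almost every `s`
  -- through measurability of the properties themselves.
  have hHb : ∀ i, ∀ᵐ s ∂ν, |H i s| ≤ δ n / 2 := fun i => by
    rw [hν, ae_restrict_iff (measurableSet_le (hHmeas i).abs measurable_const)]
    refine ae_of_all _ fun s hs => ?_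
    rw [hHA s hs i, abs_div, abs_two]
    have := (sub_one_sub_log_le (Δ := 2 * K * εt n) hκ hn0
      (vin_lower hκ hs.1 i) (vin_lower hκ hs0 i) (vin_sub hκ hs.1 hs0 hs.2 i)).2
    gcongr
  have hHint : ∀ i, Integrable (H i) ν := fun i =>
    Integrable.of_bound (hHmeas i).aestronglyMeasurable (δ n / 2) (hHb i)
  let β : Fin n → ℝ := fun i => (∫ s, H i s ∂ν) / ν.real Set.univ
  have hβ : ∀ i, |β i| ≤ δ n / 2 := fun i => by
    have := norm_integral_le_of_norm_le_const (f := H i) (hHb i)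
    simp only [β]
    rw [abs_div, abs_of_pos hm, div_le_iff₀ hm]
    exact this
  let bad : Set (Fin n → ℝ) :=
    {y | 3 * n * δ n ^ 2 / 2 ≤ |∑ i : Fin n, (y i ^ 2 / vin s0 n (i.1 + 1) - 1) * β i|}
  have hbad : jointLaw s0 n bad ≤ ENNReal.ofReal
      (n * (δ n / 2) ^ 2 * varSq / (3 * n * δ n ^ 2 / 2) ^ 2) := by
    have := hδpos n
    exact chebyshev_weighted_squares (fun i : Fin n => vin s0 n (i.1 + 1)) hvpos β _ hβ _
      (by positivity)
  have hbadm : MeasurableSet bad := measurableSet_le measurable_const (by fun_prop)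
  calc 1 - ENNReal.ofReal (n * (δ n / 2) ^ 2 * varSq / (3 * n * δ n ^ 2 / 2) ^ 2)
      ≤ 1 - jointLaw s0 n bad := tsub_le_tsub_left hbad 1
    _ = jointLaw s0 n badᶜ := (prob_compl_eq_one_sub hbadm).symm
    _ ≤ _ := measure_mono fun y hy => ?_
  have hsmall : |∑ i : Fin n, (y i ^ 2 / vin s0 n (i.1 + 1) - 1) * β i| < 3 * n * δ n ^ 2 / 2 :=
    not_le.1 hy
  let w : Fin n → ℝ := fun i => y i ^ 2 / vin s0 n (i.1 + 1) - 1
  have hsumm : Measurable[mF] fun s => ∑ i, w i * H i s :=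
    Finset.measurable_fun_sum _ fun i _ => (hHmeas i).const_mul _
  have hlow : ∀ᵐ s ∂ν, Real.exp (-(n * δ n ^ 2 / 2) - ∑ i, w i * H i s) ≤ likRatio s0 s n y := by
    have hmL : Measurable[mF] fun s => Real.exp (-(n * δ n ^ 2 / 2) - ∑ i, w i * H i s) :=
      Real.measurable_exp.comp (measurable_const.sub hsumm)
    rw [hν, ae_restrict_iff (measurableSet_le hmL (hmeas n y))]
    refine ae_of_all _ fun s hs => ?_
    simp only [hHA s hs, w]
    exact (likRatio_bounds hκ hs.1 hs0 hs.2 y).1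
  have hup : ∀ᵐ s ∂ν, likRatio s0 s n y ≤ Real.exp (- ∑ i, w i * H i s) := by
    have hmU : Measurable[mF] fun s => Real.exp (- ∑ i, w i * H i s) :=
      Real.measurable_exp.comp hsumm.neg
    rw [hν, ae_restrict_iff (measurableSet_le (hmeas n y) hmU)]
    refine ae_of_all _ fun s hs => ?_
    simp only [hHA s hs, w]
    exact (likRatio_bounds hκ hs.1 hs0 hs.2 y).2
  have hRint : Integrable (fun s => likRatio s0 s n y) ν := by
    refine Integrable.of_bound (hmeas n y).aestronglyMeasurable
      (Real.exp (∑ i, |w i| * (δ n / 2))) ?_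
    filter_upwards [hlow, hup, ae_all_iff.2 hHb] with s h1 h2 h3
    rw [Real.norm_of_nonneg ((Real.exp_pos _).le.trans h1)]
    refine h2.trans (Real.exp_le_exp.2 ?_)
    rw [← Finset.sum_neg_distrib]
    refine Finset.sum_le_sum fun i _ => (neg_le_abs _).trans ?_
    rw [abs_mul]
    exact mul_le_mul_of_nonneg_left (h3 i) (abs_nonneg _)
  refine le_trans ?_ (mass_mul_exp_average_le ν hm H hHint _ hRint w _ hlow)
  -- `8 K² / κ⁴ * ε² = 2 δ²`: `n δ² / 2` pays for the mean, `3 n δ² / 2` for the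
  -- fluctuation.
  have hexp : Real.exp (-(8 * K ^ 2 / κ ^ 4 + Cbar) * n * (εt n) ^ 2)
      = Real.exp (-Cbar * n * (εt n) ^ 2) * Real.exp (-(2 * n * δ n ^ 2)) := by
    rw [← Real.exp_add]
    congr 1
    simp only [hδ]
    field_simp
    ring
  rw [hexp, ← mul_assoc]
  refine mul_le_mul hmass (Real.exp_le_exp.2 ?_) (Real.exp_pos _).le hm.le
  have := (abs_lt.1 hsmall).2
  change _ ≤ -(n * δ n ^ 2 / 2) - ∑ i : Fin n, (y i ^ 2 / vin s0 n (i.1 + 1) - 1) * β i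
  linarith
end
end

section
/- (Uniform Riemann-sum approximation.) There exists a constant B > 0, depending only on κ, K, M, such that for every n ≥ 2 and every s ∈ 𝒳, | (1/n) Σ_{i=1}^n f_s(z_i)² − ∫_0^1 (s0²(u) − s²(u))² / s⁴(u) du | ≤ B/n. -/
/-!
On a cell `[a, b]` of length `h = 1/n`, put `p = s0² - s²` and `q = s²`; both are Lipschitz with
constant `4KM`, and `q ≥ κ²`. The quotient of the means `∫ p / ∫ q` is within `O(h)` of the pointwise
quotient `p u / q u` at each `u` of the cell, because
`∫ p / ∫ q - p u / q u = (∫ (p v - (p u / q u) q v) dv) / ∫ q` and the integrand vanishes at `v = u`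
and varies by `O(h)`. Both quotients are bounded by `K²/κ²`, so their squares differ by `O(h)` too.
Integrating over the cell gives an error `O(h²)` (`cell_bound`), and the `n` cells add up to `O(1/n)`.
-/

noncomputable section
open MeasureTheory ProbabilityTheory Real Filter

/-- Members of the class are `M`-Lipschitz and bounded by `K`, so their squares are
`2KM`-Lipschitz. -/
lemma memX.sq_lipschitz {κ K M : ℝ} {s : ℝ → ℝ} (hκ : 0 < κ) (hs : memX κ K M s) {x y : ℝ}
    (hx : x ∈ Set.Icc (0:ℝ) 1) (hy : y ∈ Set.Icc (0:ℝ) 1) :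
    |(s x)^2 - (s y)^2| ≤ 2 * K * M * |x - y| := by
  have h1 : |s x - s y| ≤ M * |x - y| :=
    (convex_Icc (0:ℝ) 1).norm_image_sub_le_of_norm_derivWithin_le hs.2.1 hs.2.2 hy hx
  obtain ⟨hx1, hx2⟩ := hs.1 x hx
  obtain ⟨hy1, hy2⟩ := hs.1 y hy
  have h2 : |s x + s y| ≤ 2 * K := by rw [abs_le]; constructor <;> linarith
  calc |(s x)^2 - (s y)^2| = |s x + s y| * |s x - s y| := by rw [← abs_mul]; ring_nf
    _ ≤ 2 * K * (M * |x - y|) := by gcongr; linarith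
    _ = _ := by ring

/-- The error on one cell: comparing the square of a quotient of integrals with the integral of the
squared quotient costs the square of the length, when numerator and denominator vary by at most
`L` times that length. -/
lemma cell_bound {a b P c L : ℝ} {p q : ℝ → ℝ} (hab : a < b) (hc : 0 < c) (hP : 0 < P)
    (hL : 0 < L)
    (hpc : ContinuousOn p (Set.Icc a b)) (hqc : ContinuousOn q (Set.Icc a b))
    (hpP : ∀ u ∈ Set.Icc a b, |p u| ≤ P) (hqc' : ∀ u ∈ Set.Icc a b, c ≤ q u)
    (hpL : ∀ u ∈ Set.Icc a b, ∀ v ∈ Set.Icc a b, |p v - p u| ≤ L * (b - a))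
    (hqL : ∀ u ∈ Set.Icc a b, ∀ v ∈ Set.Icc a b, |q v - q u| ≤ L * (b - a)) :
    |(b - a) * ((∫ u in a..b, p u) / (∫ u in a..b, q u))^2 - ∫ u in a..b, (p u)^2 / (q u)^2|
      ≤ 2 * (P / c) * (L * (1 + P / c) / c) * (b - a)^2 := by
  have hh : 0 < b - a := sub_pos.2 hab
  have hsub : Set.uIoc a b ⊆ Set.Icc a b := by
    rw [Set.uIoc_of_le hab.le]; exact Set.Ioc_subset_Icc_self
  have hpi : IntervalIntegrable p volume a b := hpc.intervalIntegrable_of_Icc hab.le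
  have hqi : IntervalIntegrable q volume a b := hqc.intervalIntegrable_of_Icc hab.le
  have hgi : IntervalIntegrable (fun u => (p u)^2 / (q u)^2) volume a b := by
    apply ContinuousOn.intervalIntegrable_of_Icc hab.le
    exact (hpc.pow 2).div (hqc.pow 2) fun u hu => (pow_pos (hc.trans_le (hqc' u hu)) 2).ne'
  have hQ : c * (b - a) ≤ ∫ u in a..b, q u := by
    have := intervalIntegral.integral_mono_on hab.le
      (intervalIntegrable_const (c := c) (μ := volume)) hqi hqc'
    simpa [mul_comm] using this
  have hPint : |∫ u in a..b, p u| ≤ P * (b - a) := by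
    have := intervalIntegral.norm_integral_le_of_norm_le_const (f := p) (C := P)
      fun u hu => hpP u (hsub hu)
    rwa [abs_of_pos hh] at this
  set I := ∫ u in a..b, p u with hI
  set J := ∫ u in a..b, q u with hJ
  have hJ0 : 0 < J := (mul_pos hc hh).trans_le hQ
  set R := P / c with hR
  have hR0 : 0 < R := by positivity
  have hf : |I / J| ≤ R := by
    rw [abs_div, abs_of_pos hJ0, hR, div_le_div_iff₀ hJ0 hc]
    calc |I| * c ≤ P * (b - a) * c := by gcongr
      _ = P * (c * (b - a)) := by ring
      _ ≤ P * J := by gcongr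
  have hg : ∀ u ∈ Set.Icc a b, |p u / q u| ≤ R := by
    intro u hu
    have hq := hqc' u hu
    rw [abs_div, abs_of_pos (hc.trans_le hq)]
    exact div_le_div₀ hP.le (hpP u hu) hc hq
  have hfg : ∀ u ∈ Set.Icc a b, |I / J - p u / q u| ≤ L * (1 + R) / c * (b - a) := by
    intro u hu
    set r := p u / q u with hr
    have hrq : p u = r * q u := by
      rw [hr, div_mul_cancel₀ _ (hc.trans_le (hqc' u hu)).ne']
    have e1 : I / J - r = (∫ v in a..b, (p v - r * q v)) / J := by
      rw [intervalIntegral.integral_sub hpi (hqi.const_mul r),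
        intervalIntegral.integral_const_mul, ← hI, ← hJ]
      field_simp
    have e2 : |∫ v in a..b, (p v - r * q v)| ≤ L * (b - a) * (1 + R) * (b - a) := by
      have := intervalIntegral.norm_integral_le_of_norm_le_const (a := a) (b := b)
        (f := fun v => p v - r * q v) (C := L * (b - a) * (1 + R)) fun v hv => by
          have hv := hsub hv
          have e : p v - r * q v = (p v - p u) - r * (q v - q u) := by rw [hrq]; ring
          rw [Real.norm_eq_abs, e]
          calc _ ≤ |p v - p u| + |r * (q v - q u)| := abs_sub _ _
            _ = |p v - p u| + |r| * |q v - q u| := by rw [abs_mul]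
            _ ≤ L * (b - a) + R * (L * (b - a)) := by
                gcongr
                · exact hpL u hu v hv
                · exact hg u hu
                · exact hqL u hu v hv
            _ = _ := by ring
      rwa [abs_of_pos hh] at this
    rw [e1, abs_div, abs_of_pos hJ0, div_le_iff₀ hJ0]
    calc _ ≤ L * (b - a) * (1 + R) * (b - a) := e2
      _ = L * (1 + R) / c * (b - a) * (c * (b - a)) := by field_simp
      _ ≤ _ := by gcongr
  have e3 : (b - a) * (I / J)^2 - ∫ u in a..b, (p u)^2 / (q u)^2
      = ∫ u in a..b, ((I / J)^2 - (p u)^2 / (q u)^2) := by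
    rw [intervalIntegral.integral_sub intervalIntegrable_const hgi]
    simp
  rw [e3]
  have := intervalIntegral.norm_integral_le_of_norm_le_const (a := a) (b := b)
    (f := fun u => (I / J)^2 - (p u)^2 / (q u)^2)
    (C := 2 * R * (L * (1 + R) / c * (b - a))) fun u hu => by
      have hu := hsub hu
      have e : (I / J)^2 - (p u)^2 / (q u)^2
          = (I / J + p u / q u) * (I / J - p u / q u) := by rw [← div_pow]; ring
      rw [Real.norm_eq_abs, e, abs_mul]
      have h1 : |I / J + p u / q u| ≤ 2 * R :=
        (abs_add_le _ _).trans (by linarith [hg u hu])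
      gcongr
      exact hfg u hu
  rw [abs_of_pos hh, Real.norm_eq_abs] at this
  exact this.trans_eq (by ring)

theorem statement11 (κ K M : ℝ) (hκ : 0 < κ) (hκK : κ < K) (hM : 0 < M) :
    ∃ B : ℝ, 0 < B ∧ ∀ s0 s : ℝ → ℝ, memX κ K M s0 → memX κ K M s →
      ∀ n : ℕ, 2 ≤ n →
        |(1/(n:ℝ)) * ∑ i ∈ Finset.range n, (fS s0 s n ((i:ℝ)/n))^2
            - ∫ u in (0:ℝ)..1, ((s0 u)^2 - (s u)^2)^2 / (s u)^4|
          ≤ B / n := by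
  have hK : 0 < K := hκ.trans hκK
  set D := 2 * (K^2 / κ^2) * (4 * K * M * (1 + K^2 / κ^2) / κ^2) with hD
  refine ⟨D, by positivity, fun s0 s hs0 hs n hn => ?_⟩
  have hn0 : (0:ℝ) < n := by exact_mod_cast (by omega : 0 < n)
  have hc0 : ContinuousOn s0 (Set.Icc 0 1) := hs0.2.1.continuousOn
  have hc : ContinuousOn s (Set.Icc 0 1) := hs.2.1.continuousOn
  have hpos : ∀ u ∈ Set.Icc (0:ℝ) 1, 0 < s u := fun u hu => hκ.trans_le (hs.1 u hu).1
  have hcell : ∀ i < n, Set.Icc ((i:ℝ)/n) (((i+1:ℕ):ℝ)/n) ⊆ Set.Icc 0 1 := by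
    intro i hi
    apply Set.Icc_subset_Icc (by positivity)
    rw [div_le_one hn0]
    exact_mod_cast hi
  have hlt : ∀ i : ℕ, (i:ℝ)/n < ((i+1:ℕ):ℝ)/n := by
    intro i
    gcongr
    exact_mod_cast Nat.lt_succ_self i
  have hlen : ∀ i : ℕ, ((i+1:ℕ):ℝ)/n - (i:ℝ)/n = 1/n := by
    intro i; push_cast; ring
  have hgc : ContinuousOn (fun u => ((s0 u)^2 - (s u)^2)^2 / (s u)^4) (Set.Icc 0 1) :=
    (((hc0.pow 2).sub (hc.pow 2)).pow 2).div (hc.pow 4) fun u hu => (pow_pos (hpos u hu) 4).ne'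
  have hsplit : ∫ u in (0:ℝ)..1, ((s0 u)^2 - (s u)^2)^2 / (s u)^4
      = ∑ i ∈ Finset.range n,
        ∫ u in ((i:ℝ)/n)..(((i+1:ℕ):ℝ)/n), ((s0 u)^2 - (s u)^2)^2 / (s u)^4 := by
    rw [intervalIntegral.sum_integral_adjacent_intervals (a := fun i : ℕ => (i:ℝ)/n)
      fun i hi => (hgc.mono (hcell i hi)).intervalIntegrable_of_Icc (hlt i).le]
    simp [hn0.ne']
  have hbound : ∀ i ∈ Finset.range n,
      |1/(n:ℝ) * (fS s0 s n ((i:ℝ)/n))^2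
        - ∫ u in ((i:ℝ)/n)..(((i+1:ℕ):ℝ)/n), ((s0 u)^2 - (s u)^2)^2 / (s u)^4|
        ≤ D * (1/n)^2 := by
    intro i hi
    have hi := hcell i (Finset.mem_range.1 hi)
    have hdist : ∀ u ∈ Set.Icc ((i:ℝ)/n) (((i+1:ℕ):ℝ)/n),
        ∀ v ∈ Set.Icc ((i:ℝ)/n) (((i+1:ℕ):ℝ)/n), |v - u| ≤ ((i+1:ℕ):ℝ)/n - (i:ℝ)/n := by
      intro u hu v hv
      rw [abs_le]; constructor <;> linarith [hu.1, hu.2, hv.1, hv.2]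
    have hsq : ∀ t : ℝ → ℝ, memX κ K M t → ∀ u ∈ Set.Icc ((i:ℝ)/n) (((i+1:ℕ):ℝ)/n),
        ∀ v ∈ Set.Icc ((i:ℝ)/n) (((i+1:ℕ):ℝ)/n),
        |(t v)^2 - (t u)^2| ≤ 2 * K * M * (((i+1:ℕ):ℝ)/n - (i:ℝ)/n) := by
      intro t ht u hu v hv
      refine (ht.sq_lipschitz hκ (hi hv) (hi hu)).trans ?_
      gcongr
      exact hdist u hu v hv
    have key := cell_bound (p := fun u => (s0 u)^2 - (s u)^2) (q := fun u => (s u)^2)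
      (P := K^2) (c := κ^2) (L := 4 * K * M) (hlt i) (by positivity) (by positivity)
      (by positivity) (((hc0.pow 2).sub (hc.pow 2)).mono hi) ((hc.pow 2).mono hi)
      (fun u hu => by
        obtain ⟨h1, h2⟩ := hs0.1 u (hi hu)
        obtain ⟨h3, h4⟩ := hs.1 u (hi hu)
        have h5 : (s0 u)^2 ≤ K^2 := pow_le_pow_left₀ (hκ.le.trans h1) h2 2
        have h6 : (s u)^2 ≤ K^2 := pow_le_pow_left₀ (hκ.le.trans h3) h4 2
        rw [abs_le]
        constructor <;> linarith [sq_nonneg (s0 u), sq_nonneg (s u)])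
      (fun u hu => pow_le_pow_left₀ hκ.le (hs.1 u (hi hu)).1 2)
      (fun u hu v hv => by
        have h1 := abs_le.1 (hsq s0 hs0 u hu v hv)
        have h2 := abs_le.1 (hsq s hs u hu v hv)
        rw [abs_le]
        constructor <;> linarith [h1.1, h1.2, h2.1, h2.2])
      (fun u hu v hv => by
        refine (hsq s hs u hu v hv).trans ?_
        have := sub_pos.2 (hlt i)
        gcongr
        norm_num)
    have hend : (i:ℝ)/n + 1/n = ((i+1:ℕ):ℝ)/n := by linarith [hlen i]
    have h4 : ∀ u, (s u)^4 = ((s u)^2)^2 := fun u => by ring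
    rw [hlen] at key
    simp only [fS, hend, h4]
    exact key
  rw [hsplit, Finset.mul_sum, ← Finset.sum_sub_distrib]
  calc _ ≤ ∑ i ∈ Finset.range n, D * (1/(n:ℝ))^2 :=
        (Finset.abs_sum_le_sum_abs _ _).trans (Finset.sum_le_sum hbound)
    _ = D / n := by
        rw [Finset.sum_const, Finset.card_range, nsmul_eq_mul]
        field_simp
end
end
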